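/- arXiv:math/0503341 — 3 statements merged into one kernel-verified Lean document; each statement's English description precedes it below -/
import Mathlib

section
/- Let S be any subset of SU(2) and let Z = {g ∈ SU(2) : g·s = s·g for all s ∈ S} be its centralizer. Then either Z is a connected topological space (in the subspace topology of SU(2)), or Z = {1, -1}, where 1 is the identity matrix and -1 its negative. -/
open Matrix

lemma su2_aux_iff (g : Matrix (Fin 2) (Fin 2) ℂ) :
    (gᴴ * g = 1 ∧ g.det = 1) ↔
      (g 1 1 = star (g 0 0) ∧ g 1 0 = - star (g 0 1) ∧
        (g 0 0).re ^ 2 + (g 0 0).im ^ 2 + (g 0 1).re ^ 2 + (g 0 1).im ^ 2 = 1) := by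
  constructor
  · rintro ⟨h, hd⟩
    have h2 : gᴴ = g.adjugate := by
      calc gᴴ = gᴴ * (g * g.adjugate) := by rw [Matrix.mul_adjugate, hd]; simp
        _ = g.adjugate := by rw [← Matrix.mul_assoc, h, Matrix.one_mul]
    rw [Matrix.adjugate_fin_two] at h2
    have a := congrFun (congrFun h2 0) 0
    have b := congrFun (congrFun h2 1) 0
    simp [Matrix.conjTranspose_apply] at a b
    have e1 : g 1 1 = star (g 0 0) := by simp [a]
    have e2 : g 1 0 = - star (g 0 1) := by simp [b]
    refine ⟨e1, e2, ?_⟩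
    rw [Matrix.det_fin_two, e1, e2] at hd
    have := congrArg Complex.re hd
    simp at this
    linarith
  · rintro ⟨e1, e2, e3⟩
    constructor
    · ext i j
      fin_cases i <;> fin_cases j <;>
        simp [Matrix.mul_apply, Fin.sum_univ_two, e1, e2, Complex.ext_iff] <;>
        (try constructor) <;> linarith
    · rw [Matrix.det_fin_two, e1, e2]
      simp [Complex.ext_iff]
      constructor <;> linarith

lemma su2_aux_path (S : Set (Matrix (Fin 2) (Fin 2) ℂ)) (g : Matrix (Fin 2) (Fin 2) ℂ)
    (hg : (gᴴ * g = 1 ∧ g.det = 1) ∧ ∀ s ∈ S, g * s = s * g)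
    (h1 : g ≠ 1) (h2 : g ≠ -1) :
    ∃ t ⊆ {g : Matrix (Fin 2) (Fin 2) ℂ |
        (gᴴ * g = 1 ∧ g.det = 1) ∧ ∀ s ∈ S, g * s = s * g},
      (1 : Matrix (Fin 2) (Fin 2) ℂ) ∈ t ∧ -1 ∈ t ∧ g ∈ t ∧ IsPreconnected t := by
  obtain ⟨hu, hc⟩ := hg
  obtain ⟨e1, e2, e3⟩ := (su2_aux_iff g).1 hu
  set c := (g 0 0).re with hcdef
  have hlt : 0 < 1 - c ^ 2 := by
    by_contra hle
    have i0 : (g 0 0).im = 0 := by nlinarith [sq_nonneg (g 0 0).im, sq_nonneg (g 0 1).re, sq_nonneg (g 0 1).im]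
    have i1 : (g 0 1).re = 0 := by nlinarith [sq_nonneg (g 0 0).im, sq_nonneg (g 0 1).re, sq_nonneg (g 0 1).im]
    have i2 : (g 0 1).im = 0 := by nlinarith [sq_nonneg (g 0 0).im, sq_nonneg (g 0 1).re, sq_nonneg (g 0 1).im]
    have hc2 : c ^ 2 = 1 := by rw [i0, i1, i2] at e3; linarith
    rcases (sq_eq_sq_iff_eq_or_eq_neg.1 (by rw [hc2, one_pow] : c ^ 2 = 1 ^ 2)) with h | h
    · apply h1
      ext i j
      fin_cases i <;> fin_cases j <;> simp [e1, e2, Complex.ext_iff, i0, i1, i2, ← hcdef, h]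
    · apply h2
      ext i j
      fin_cases i <;> fin_cases j <;> simp [e1, e2, Complex.ext_iff, i0, i1, i2, ← hcdef, h]
  have hcm : -1 ≤ c ∧ c ≤ 1 := by constructor <;> nlinarith
  set r := Real.sqrt (1 - c ^ 2) with hr
  have hr0 : 0 < r := Real.sqrt_pos.2 hlt
  have hr2 : r ^ 2 = 1 - c ^ 2 := Real.sq_sqrt hlt.le
  let γ : ℝ → Matrix (Fin 2) (Fin 2) ℂ := fun t =>
    ((Real.cos t : ℝ) : ℂ) • (1 : Matrix (Fin 2) (Fin 2) ℂ) +
      ((Real.sin t / r : ℝ) : ℂ) • (g - (c : ℂ) • (1 : Matrix (Fin 2) (Fin 2) ℂ))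
  have hγ : Continuous γ := by fun_prop
  refine ⟨Set.range γ, ?_, ⟨0, ?_⟩, ⟨Real.pi, ?_⟩, ⟨Real.arccos c, ?_⟩, isPreconnected_range hγ⟩
  · rintro _ ⟨t, rfl⟩
    refine ⟨(su2_aux_iff _).2 ⟨?_, ?_, ?_⟩, ?_⟩
    · simp only [γ]
      generalize Real.sin t / r = q
      generalize Real.cos t = p
      simp [e1, Complex.ext_iff]
    · simp only [γ]
      generalize Real.sin t / r = q
      generalize Real.cos t = p
      simp [e2, Complex.ext_iff]
    · have hq : (Real.sin t / r) ^ 2 * (1 - c ^ 2) = Real.sin t ^ 2 := by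
        rw [← hr2]; field_simp
      have hp := Real.sin_sq_add_cos_sq t
      simp only [γ]
      generalize Real.sin t / r = q at *
      generalize Real.cos t = p at *
      simp [← hcdef]
      linear_combination hp + hq + q ^ 2 * e3
    · intro s hs
      simp only [γ, add_mul, mul_add, sub_mul, mul_sub, smul_mul_assoc, mul_smul_comm, one_mul,
        mul_one, hc s hs]
  · simp [γ]
  · simp [γ]
  · simp only [γ, Real.cos_arccos hcm.1 hcm.2, Real.sin_arccos, ← hr, div_self hr0.ne']
    simp

/-- The centralizer of any subset of `SU(2)` is either connected
(in the subspace topology) or equal to `{1, -1}`. -/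
theorem su2_centralizer_connected_or_center
    (S : Set (Matrix (Fin 2) (Fin 2) ℂ))
    (hS : ∀ s ∈ S, sᴴ * s = 1 ∧ s.det = 1) :
    IsConnected {g : Matrix (Fin 2) (Fin 2) ℂ |
        (gᴴ * g = 1 ∧ g.det = 1) ∧ ∀ s ∈ S, g * s = s * g} ∨
    {g : Matrix (Fin 2) (Fin 2) ℂ |
        (gᴴ * g = 1 ∧ g.det = 1) ∧ ∀ s ∈ S, g * s = s * g} = {1, -1} := by
  by_cases hh : ∃ h : Matrix (Fin 2) (Fin 2) ℂ,
      ((hᴴ * h = 1 ∧ h.det = 1) ∧ ∀ s ∈ S, h * s = s * h) ∧ h ≠ 1 ∧ h ≠ -1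
  · left
    obtain ⟨h, hZ, hn1, hn2⟩ := hh
    refine ⟨⟨h, hZ⟩, isPreconnected_of_forall 1 ?_⟩
    intro g hg
    by_cases hg1 : g = 1 ∨ g = -1
    · obtain ⟨t, ht, a, b, -, d⟩ := su2_aux_path S h hZ hn1 hn2
      refine ⟨t, ht, a, ?_, d⟩
      rcases hg1 with rfl | rfl <;> assumption
    · push Not at hg1
      obtain ⟨t, ht, a, -, b, d⟩ := su2_aux_path S g hg hg1.1 hg1.2
      exact ⟨t, ht, a, b, d⟩
  · right
    push Not at hh
    ext g
    simp only [Set.mem_setOf_eq, Set.mem_insert_iff, Set.mem_singleton_iff]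
    constructor
    · intro hg
      by_cases h1 : g = 1
      · exact Or.inl h1
      · exact Or.inr (hh g hg h1)
    · rintro (rfl | rfl)
      · simp
      · simp [Matrix.det_fin_two]
end

section
/- Let H be a subgroup of SO(3) whose underlying set is connected in the subspace topology. Then the centralizer Z = {g ∈ SO(3) : g·h = h·g for all h ∈ H} is a connected topological space (in the subspace topology of SO(3)). -/
open Matrix

namespace SO3aux

abbrev M3 := Matrix (Fin 3) (Fin 3) ℝ

def ax (h : M3) : Fin 3 → ℝ := ![h 2 1 - h 1 2, h 0 2 - h 2 0, h 1 0 - h 0 1]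

noncomputable def rot (t : ℝ) : M3 := !![Real.cos t, -Real.sin t, 0; Real.sin t, Real.cos t, 0; 0, 0, 1]

lemma adj_eq {g : M3} (h1 : gᵀ * g = 1) (h2 : g.det = 1) : g.adjugate = gᵀ := by
  have h := Matrix.mul_adjugate g
  rw [h2, one_smul] at h
  calc g.adjugate = (gᵀ * g) * g.adjugate := by rw [h1, one_mul]
    _ = gᵀ := by rw [mul_assoc, h, mul_one]

lemma cof {g : M3} (h1 : gᵀ * g = 1) (h2 : g.det = 1) :
    (g 0 0 = g 1 1 * g 2 2 - g 1 2 * g 2 1 ∧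
    g 0 1 = g 1 2 * g 2 0 - g 1 0 * g 2 2 ∧
    g 0 2 = g 1 0 * g 2 1 - g 1 1 * g 2 0) ∧
    (g 1 0 = g 0 2 * g 2 1 - g 0 1 * g 2 2 ∧
    g 1 1 = g 0 0 * g 2 2 - g 0 2 * g 2 0 ∧
    g 1 2 = g 0 1 * g 2 0 - g 0 0 * g 2 1) ∧
    (g 2 0 = g 0 1 * g 1 2 - g 0 2 * g 1 1 ∧
    g 2 1 = g 0 2 * g 1 0 - g 0 0 * g 1 2 ∧
    g 2 2 = g 0 0 * g 1 1 - g 0 1 * g 1 0) := by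
  have h := adj_eq h1 h2
  rw [Matrix.adjugate_fin_three] at h
  have e : ∀ i j, _ := fun i j => congrFun (congrFun h i) j
  have a00 := e 0 0
  have a01 := e 0 1
  have a02 := e 0 2
  have a10 := e 1 0
  have a11 := e 1 1
  have a12 := e 1 2
  have a20 := e 2 0
  have a21 := e 2 1
  have a22 := e 2 2
  simp [Matrix.transpose_apply] at a00 a01 a02 a10 a11 a12 a20 a21 a22
  refine ⟨⟨?_, ?_, ?_⟩, ⟨?_, ?_, ?_⟩, ⟨?_, ?_, ?_⟩⟩ <;> linarith

lemma ax_conj {g : M3} (h1 : gᵀ * g = 1) (h2 : g.det = 1) (h : M3) :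
    ax (g * h * gᵀ) = g *ᵥ ax h := by
  obtain ⟨⟨a, b, c⟩, ⟨d, e, f⟩, ⟨p, q, r⟩⟩ := cof h1 h2
  funext i
  fin_cases i
  · simp [ax, Matrix.mul_apply, Matrix.mulVec, dotProduct, Fin.sum_univ_three]
    linear_combination -(h 2 1 - h 1 2) * a - (h 0 2 - h 2 0) * b - (h 1 0 - h 0 1) * c
  · simp [ax, Matrix.mul_apply, Matrix.mulVec, dotProduct, Fin.sum_univ_three]
    linear_combination -(h 2 1 - h 1 2) * d - (h 0 2 - h 2 0) * e - (h 1 0 - h 0 1) * f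
  · simp [ax, Matrix.mul_apply, Matrix.mulVec, dotProduct, Fin.sum_univ_three]
    linear_combination -(h 2 1 - h 1 2) * p - (h 0 2 - h 2 0) * q - (h 1 0 - h 0 1) * r

lemma comm_fix {g : M3} (h1 : gᵀ * g = 1) (h2 : g.det = 1) {h : M3} (hc : g * h = h * g) :
    g *ᵥ ax h = ax h := by
  rw [← ax_conj h1 h2, hc, mul_assoc, mul_eq_one_comm.mp h1, mul_one]

lemma frame_unit (v : Fin 3 → ℝ) (hv : v 0 ^ 2 + v 1 ^ 2 + v 2 ^ 2 = 1) :
    ∃ Q : M3, Qᵀ * Q = 1 ∧ Q *ᵥ ![0, 0, 1] = v := by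
  by_cases h : v 2 = 1
  · refine ⟨1, by simp, ?_⟩
    have h0 : v 0 = 0 := by nlinarith [sq_nonneg (v 0), sq_nonneg (v 1)]
    have h1 : v 1 = 0 := by nlinarith [sq_nonneg (v 0), sq_nonneg (v 1)]
    funext i
    fin_cases i <;> simp [h0, h1, h]
  · have hk : 1 - v 2 ≠ 0 := fun h' => h (by linarith)
    obtain ⟨k, hk'⟩ : ∃ k, k * (1 - v 2) = 1 := ⟨(1 - v 2)⁻¹, inv_mul_cancel₀ hk⟩
    refine ⟨!![1 - k * v 0 ^ 2, - k * v 0 * v 1, v 0;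
      - k * v 0 * v 1, 1 - k * v 1 ^ 2, v 1;
      v 0, v 1, v 2], ?_, ?_⟩
    · ext i j
      fin_cases i <;> fin_cases j <;>
        simp [Matrix.mul_apply, Fin.sum_univ_three, Matrix.one_apply] <;> grind
    · funext i
      fin_cases i <;> simp [Matrix.mulVec, dotProduct, Fin.sum_univ_three]

lemma frame (v : Fin 3 → ℝ) (hv : v ≠ 0) :
    ∃ (Q : M3) (r : ℝ), Qᵀ * Q = 1 ∧ r ≠ 0 ∧ v = r • (Q *ᵥ ![0, 0, 1]) := by
  have hpos : 0 < v 0 ^ 2 + v 1 ^ 2 + v 2 ^ 2 := by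
    by_contra hc
    apply hv
    funext i
    fin_cases i <;> simp <;> nlinarith [sq_nonneg (v 0), sq_nonneg (v 1), sq_nonneg (v 2)]
  set r := Real.sqrt (v 0 ^ 2 + v 1 ^ 2 + v 2 ^ 2) with hr
  have hr0 : 0 < r := Real.sqrt_pos.mpr hpos
  have hrs : r ^ 2 = v 0 ^ 2 + v 1 ^ 2 + v 2 ^ 2 := Real.sq_sqrt hpos.le
  obtain ⟨Q, hQ, hQv⟩ := frame_unit (r⁻¹ • v) (by
    simp only [Pi.smul_apply, smul_eq_mul]
    field_simp
    linarith)
  exact ⟨Q, r, hQ, hr0.ne', by rw [hQv, smul_smul, mul_inv_cancel₀ hr0.ne', one_smul]⟩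

lemma rot_of_fix {g : M3} (h1 : gᵀ * g = 1) (h2 : g.det = 1)
    (hf : g *ᵥ ![0, 0, 1] = ![0, 0, 1]) : ∃ t, g = rot t := by
  obtain ⟨⟨a, b, c⟩, ⟨d, e, f⟩, ⟨p, q, r⟩⟩ := cof h1 h2
  have f0 := congrFun hf 0
  have f1 := congrFun hf 1
  have f2 := congrFun hf 2
  simp [Matrix.mulVec, dotProduct, Fin.sum_univ_three] at f0 f1 f2
  rw [f0, f1] at p q
  rw [f1, f2] at a b
  rw [f0, f2] at d e
  have p' : g 2 0 = 0 := by linarith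
  have q' : g 2 1 = 0 := by linarith
  have hs : g 0 0 ^ 2 + g 1 0 ^ 2 = 1 := by
    rw [f2] at r
    linear_combination -r + g 0 0 * a + g 1 0 * d
  let z : ℂ := ⟨g 0 0, g 1 0⟩
  have hz : ‖z‖ = 1 := by
    rw [Complex.norm_def, Complex.normSq_apply, Real.sqrt_eq_one]
    simp only [z]; linarith
  have hz0 : z ≠ 0 := by intro h; rw [h] at hz; simp at hz
  refine ⟨z.arg, ?_⟩
  have hc : Real.cos z.arg = g 0 0 := by rw [Complex.cos_arg hz0, hz]; simp [z]
  have hsn : Real.sin z.arg = g 1 0 := by rw [Complex.sin_arg, hz]; simp [z]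
  ext i j
  fin_cases i <;> fin_cases j <;> simp [rot, hc, hsn, f0, f1, f2, p', q'] <;> linarith

lemma rot_comm (s t : ℝ) : rot s * rot t = rot t * rot s := by
  ext i j
  fin_cases i <;> fin_cases j <;> simp [rot, Matrix.mul_apply, Fin.sum_univ_three] <;> ring

lemma rot_orth (t : ℝ) : (rot t)ᵀ * rot t = 1 := by
  have := Real.sin_sq_add_cos_sq t
  ext i j
  fin_cases i <;> fin_cases j <;>
    simp [rot, Matrix.mul_apply, Fin.sum_univ_three] <;> linarith

lemma rot_det (t : ℝ) : (rot t).det = 1 := by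
  have := Real.sin_sq_add_cos_sq t
  rw [Matrix.det_fin_three]
  simp [rot]; linarith

lemma rot_fix (t : ℝ) : rot t *ᵥ ![0, 0, 1] = ![0, 0, 1] := by
  funext i
  fin_cases i <;> simp [rot, Matrix.mulVec, dotProduct, Fin.sum_univ_three]

lemma rot_cont : Continuous rot := by
  refine continuous_matrix fun i j => ?_
  fin_cases i <;> fin_cases j <;> simp [rot] <;> fun_prop

def stab (v : Fin 3 → ℝ) : Set M3 := {g | (gᵀ * g = 1 ∧ g.det = 1) ∧ g *ᵥ v = v}

lemma stab_eq (v : Fin 3 → ℝ) (hv : v ≠ 0) :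
    ∃ Q : M3, Qᵀ * Q = 1 ∧ stab v = Set.range (fun t => Q * rot t * Qᵀ) := by
  obtain ⟨Q, r, hQ, hr, hvr⟩ := frame v hv
  have hQ' : Q * Qᵀ = 1 := mul_eq_one_comm.mp hQ
  have hd : Q.det * Q.det = 1 := by
    have := congrArg Matrix.det hQ
    rwa [Matrix.det_mul, Matrix.det_transpose, Matrix.det_one] at this
  refine ⟨Q, hQ, ?_⟩
  ext g
  constructor
  · rintro ⟨⟨h1, h2⟩, h3⟩
    have hf : g *ᵥ (Q *ᵥ ![0, 0, 1]) = Q *ᵥ ![0, 0, 1] := by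
      rw [hvr, Matrix.mulVec_smul] at h3
      exact smul_right_injective _ hr h3
    obtain ⟨t, ht⟩ := rot_of_fix (g := Qᵀ * g * Q) (by
      calc (Qᵀ * g * Q)ᵀ * (Qᵀ * g * Q) = Qᵀ * gᵀ * (Q * Qᵀ) * g * Q := by
            simp only [Matrix.transpose_mul, Matrix.transpose_transpose, mul_assoc]
        _ = Qᵀ * (gᵀ * g) * Q := by rw [hQ']; simp only [mul_one, mul_assoc]
        _ = 1 := by rw [h1, mul_one, hQ]) (by
      rw [Matrix.det_mul, Matrix.det_mul, Matrix.det_transpose, h2, mul_one, hd]) (by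
      rw [← Matrix.mulVec_mulVec, ← Matrix.mulVec_mulVec, hf, Matrix.mulVec_mulVec, hQ,
        Matrix.one_mulVec])
    refine ⟨t, ?_⟩
    show Q * rot t * Qᵀ = g
    rw [← ht]
    calc Q * (Qᵀ * g * Q) * Qᵀ = (Q * Qᵀ) * g * (Q * Qᵀ) := by simp only [mul_assoc]
      _ = g := by rw [hQ', one_mul, mul_one]
  · rintro ⟨t, rfl⟩
    refine ⟨⟨?_, ?_⟩, ?_⟩
    · calc (Q * rot t * Qᵀ)ᵀ * (Q * rot t * Qᵀ)
          = Q * (rot t)ᵀ * (Qᵀ * Q) * rot t * Qᵀ := by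
            simp only [Matrix.transpose_mul, Matrix.transpose_transpose, mul_assoc]
        _ = Q * ((rot t)ᵀ * rot t) * Qᵀ := by rw [hQ]; simp only [mul_one, mul_assoc]
        _ = 1 := by rw [rot_orth, mul_one, hQ']
    · simp only [Matrix.det_mul, Matrix.det_transpose, rot_det, mul_one, hd]
    · have : (Q * rot t * Qᵀ) *ᵥ (Q *ᵥ ![0, 0, 1]) = Q *ᵥ ![0, 0, 1] := by
        rw [Matrix.mulVec_mulVec, mul_assoc, hQ, mul_one, ← Matrix.mulVec_mulVec, rot_fix]
      show (Q * rot t * Qᵀ) *ᵥ v = v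
      rw [hvr, Matrix.mulVec_smul, this]

lemma stab_conn (v : Fin 3 → ℝ) (hv : v ≠ 0) : IsConnected (stab v) := by
  obtain ⟨Q, -, h⟩ := stab_eq v hv
  rw [h]
  have := rot_cont
  exact isConnected_range (by fun_prop)

lemma stab_comm (v : Fin 3 → ℝ) (hv : v ≠ 0) {a b : M3} (ha : a ∈ stab v) (hb : b ∈ stab v) :
    a * b = b * a := by
  obtain ⟨Q, hQ, h⟩ := stab_eq v hv
  rw [h] at ha hb
  obtain ⟨s, rfl⟩ := ha
  obtain ⟨t, rfl⟩ := hb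
  have key : ∀ s t, (Q * rot s * Qᵀ) * (Q * rot t * Qᵀ) = Q * (rot s * rot t) * Qᵀ := by
    intro s t
    calc (Q * rot s * Qᵀ) * (Q * rot t * Qᵀ) = Q * rot s * (Qᵀ * Q) * rot t * Qᵀ := by
          simp only [mul_assoc]
      _ = _ := by rw [hQ]; simp only [mul_one, mul_assoc]
  show (Q * rot s * Qᵀ) * (Q * rot t * Qᵀ) = (Q * rot t * Qᵀ) * (Q * rot s * Qᵀ)
  rw [key, key, rot_comm]

lemma exists_fix {g : M3} (h1 : gᵀ * g = 1) (h2 : g.det = 1) : ∃ v, v ≠ 0 ∧ g *ᵥ v = v := by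
  have hd : (g - 1).det = 0 := by
    have e : gᵀ * (g - 1) = -(g - 1)ᵀ := by
      rw [mul_sub, h1, Matrix.transpose_sub]; simp
    have := congrArg Matrix.det e
    rw [Matrix.det_mul, Matrix.det_neg, Matrix.det_transpose, Matrix.det_transpose, h2] at this
    simp at this
    linarith
  obtain ⟨v, hv, h⟩ := Matrix.exists_mulVec_eq_zero_iff.mpr hd
  refine ⟨v, hv, ?_⟩
  rw [Matrix.sub_mulVec, Matrix.one_mulVec] at h
  exact sub_eq_zero.mp h

lemma so3_conn : IsConnected {g : M3 | gᵀ * g = 1 ∧ g.det = 1} := by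
  refine ⟨⟨1, by simp⟩, isPreconnected_of_forall 1 ?_⟩
  rintro g ⟨h1, h2⟩
  obtain ⟨v, hv, hf⟩ := exists_fix h1 h2
  exact ⟨stab v, fun x hx => hx.1, ⟨by simp, by simp⟩, ⟨⟨h1, h2⟩, hf⟩,
    (stab_conn v hv).isPreconnected⟩

lemma eq_one_of_trace {g : M3} (h1 : gᵀ * g = 1) (ht : g.trace = 3) : g = 1 := by
  have h : ((g - 1)ᵀ * (g - 1)).trace = 0 := by
    have : (g - 1)ᵀ * (g - 1) = 1 - g - gᵀ + 1 := by
      rw [Matrix.transpose_sub, sub_mul, mul_sub, mul_sub, h1]; simp; abel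
    rw [this]
    simp [Matrix.trace_add, Matrix.trace_sub, ht]
    try norm_num
  have h' : ((g - 1)ᴴ * (g - 1)).trace = 0 := by
    rwa [Matrix.conjTranspose_eq_transpose_of_trivial]
  exact sub_eq_zero.mp (Matrix.trace_conjTranspose_mul_self_eq_zero_iff.mp h')

lemma trace_sym {g : M3} (h1 : gᵀ * g = 1) (h2 : g.det = 1) (hs : ax g = 0) :
    g.trace = 3 ∨ g.trace = -1 := by
  obtain ⟨⟨a, b, c⟩, ⟨d, e, f⟩, ⟨p, q, r⟩⟩ := cof h1 h2
  have s0 := congrFun hs 0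
  have s1 := congrFun hs 1
  have s2 := congrFun hs 2
  simp [ax] at s0 s1 s2
  have e0 := congrFun (congrFun h1 0) 0
  have e1 := congrFun (congrFun h1 1) 1
  have e2 := congrFun (congrFun h1 2) 2
  simp [Matrix.mul_apply, Fin.sum_univ_three] at e0 e1 e2
  have s0' : g 2 1 = g 1 2 := by linarith
  have s1' : g 0 2 = g 2 0 := by linarith
  have s2' : g 1 0 = g 0 1 := by linarith
  have : (g.trace - 3) * (g.trace + 1) = 0 := by
    rw [Matrix.trace_fin_three]
    linear_combination -2 * a - 2 * e - 2 * r + e0 + e1 + e2 - (g 2 1 - g 1 2) * s0 -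
      (g 0 2 - g 2 0) * s1 - (g 1 0 - g 0 1) * s2
  rcases mul_eq_zero.mp this with h | h
  · left; linarith
  · right; linarith

lemma fix_two {g : M3} (h1 : gᵀ * g = 1) (h2 : g.det = 1) {v w : Fin 3 → ℝ}
    (hv : g *ᵥ v = v) (hw : g *ᵥ w = w) (hc : v ⨯₃ w ≠ 0) : g = 1 := by
  have hx : v ⨯₃ w = ax (vecMulVec w v) := by
    funext i
    fin_cases i <;> simp [ax, cross_apply, vecMulVec_apply] <;> ring
  have hg : g *ᵥ (v ⨯₃ w) = v ⨯₃ w := by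
    rw [hx, ← ax_conj h1 h2, Matrix.mul_vecMulVec, Matrix.vecMulVec_mul,
      Matrix.vecMul_transpose, hv, hw]
  set u := v ⨯₃ w with hu
  let B : M3 := (!![v 0, v 1, v 2; w 0, w 1, w 2; u 0, u 1, u 2])ᵀ
  have hB : g * B = B := by
    ext i j
    have a1 := congrFun hv i
    have a2 := congrFun hw i
    have a3 := congrFun hg i
    simp only [Matrix.mulVec, dotProduct, Fin.sum_univ_three] at a1 a2 a3
    fin_cases i <;> fin_cases j <;>
      simpa [B, Matrix.mul_apply, Fin.sum_univ_three] using (by assumption)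
  have hdet : B.det = u 0 ^ 2 + u 1 ^ 2 + u 2 ^ 2 := by
    rw [Matrix.det_transpose, Matrix.det_fin_three]
    simp [hu, cross_apply]; ring
  have hne : B.det ≠ 0 := by
    rw [hdet]
    intro h0
    apply hc
    funext i
    fin_cases i <;> simp <;> nlinarith [sq_nonneg (u 0), sq_nonneg (u 1), sq_nonneg (u 2)]
  have hun : IsUnit B := (Matrix.isUnit_iff_isUnit_det B).mpr hne.isUnit
  exact hun.mul_right_cancel (by rw [hB, one_mul])

lemma norm_pres {g : M3} (h1 : gᵀ * g = 1) (v : Fin 3 → ℝ) : (g *ᵥ v) ⬝ᵥ (g *ᵥ v) = v ⬝ᵥ v := by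
  rw [Matrix.dotProduct_mulVec, ← Matrix.mulVec_transpose, Matrix.mulVec_mulVec, h1,
    Matrix.one_mulVec]

end SO3aux

open SO3aux in
/-- The centralizer of a connected subgroup of `SO(3)` is connected. -/
theorem so3_centralizer_of_connected_subgroup_connected
    (H : Set (Matrix (Fin 3) (Fin 3) ℝ))
    (hH : ∀ h ∈ H, hᵀ * h = 1 ∧ h.det = 1)
    (hone : (1 : Matrix (Fin 3) (Fin 3) ℝ) ∈ H)
    (hmul : ∀ a ∈ H, ∀ b ∈ H, a * b ∈ H)
    (hinv : ∀ a ∈ H, aᵀ ∈ H)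
    (hconn : IsConnected H) :
    IsConnected {g : Matrix (Fin 3) (Fin 3) ℝ |
        (gᵀ * g = 1 ∧ g.det = 1) ∧ ∀ h ∈ H, g * h = h * g} := by
  by_cases hsym : ∀ h ∈ H, ax h = 0
  · have hall : ∀ h ∈ H, h = 1 := by
      intro h hh
      obtain ⟨h1, h2⟩ := hH h hh
      rcases trace_sym h1 h2 (hsym h hh) with ht | ht
      · exact eq_one_of_trace h1 ht
      · exfalso
        have hc : ContinuousOn (fun g : M3 => g.trace) H :=
          (Continuous.matrix_trace continuous_id).continuousOn
        have := hconn.isPreconnected.intermediate_value hh hone hc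
        obtain ⟨k, hk, hk0⟩ := this (show (0 : ℝ) ∈ _ by
          constructor
          · show h.trace ≤ 0
            rw [ht]; norm_num
          · show 0 ≤ (1 : M3).trace
            simp)
        have hk0' : k.trace = 0 := hk0
        rcases trace_sym (hH k hk).1 (hH k hk).2 (hsym k hk) with h' | h' <;>
          rw [hk0'] at h' <;> norm_num at h'
    convert so3_conn using 1
    ext g
    constructor
    · exact fun h => h.1
    · refine fun h => ⟨h, fun k hk => ?_⟩
      rw [hall k hk, mul_one, one_mul]
  · push Not at hsym
    obtain ⟨h, hh, hv⟩ := hsym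
    set v := ax h with hvdef
    by_cases hcr : ∀ k ∈ H, v ⨯₃ (k *ᵥ v) = 0
    · have hvpos : 0 < v ⬝ᵥ v := by
        have := (Matrix.dotProduct_star_self_pos_iff (v := v)).mpr hv
        simpa using this
      have hsq : ∀ k ∈ H, (v ⬝ᵥ (k *ᵥ v)) ^ 2 = (v ⬝ᵥ v) ^ 2 := by
        intro k hk
        have := cross_dot_cross v (k *ᵥ v) v (k *ᵥ v)
        rw [hcr k hk, norm_pres (hH k hk).1, dotProduct_comm (k *ᵥ v) v] at this
        simp at this
        linarith
      have hfix : ∀ k ∈ H, k *ᵥ v = v := by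
        intro k hk
        have hkv : v ⬝ᵥ (k *ᵥ v) = v ⬝ᵥ v := by
          rcases sq_eq_sq_iff_eq_or_eq_neg.mp (hsq k hk) with h' | h'
          · exact h'
          · exfalso
            have hc : ContinuousOn (fun g : M3 => v ⬝ᵥ (g *ᵥ v)) H := by
              apply Continuous.continuousOn
              fun_prop
            obtain ⟨l, hl, hl0⟩ := hconn.isPreconnected.intermediate_value hk hone hc
              (show (0 : ℝ) ∈ _ by
                constructor
                · show v ⬝ᵥ (k *ᵥ v) ≤ 0
                  linarith
                · show 0 ≤ v ⬝ᵥ ((1 : M3) *ᵥ v)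
                  rw [Matrix.one_mulVec]; exact hvpos.le)
            have hl0' : v ⬝ᵥ (l *ᵥ v) = 0 := hl0
            have := hsq l hl
            rw [hl0'] at this
            nlinarith
        have : (k *ᵥ v - v) ⬝ᵥ (k *ᵥ v - v) = 0 := by
          rw [sub_dotProduct, dotProduct_sub, dotProduct_sub, norm_pres (hH k hk).1,
            dotProduct_comm (k *ᵥ v) v, hkv]
          ring
        exact sub_eq_zero.mp (dotProduct_self_eq_zero.mp this)
      convert stab_conn v hv using 1
      ext g
      constructor
      · rintro ⟨⟨h1, h2⟩, h3⟩
        exact ⟨⟨h1, h2⟩, comm_fix h1 h2 (h3 h hh)⟩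
      · intro hg
        exact ⟨hg.1, fun k hk => stab_comm v hv hg ⟨hH k hk, hfix k hk⟩⟩
    · push Not at hcr
      obtain ⟨k, hk, hne⟩ := hcr
      convert (isConnected_singleton (x := (1 : M3))) using 1
      ext g
      constructor
      · rintro ⟨⟨h1, h2⟩, h3⟩
        have hw : g *ᵥ (k *ᵥ v) = k *ᵥ v := by
          rw [hvdef, ← ax_conj (hH k hk).1 (hH k hk).2]
          exact comm_fix h1 h2 (h3 _ (hmul _ (hmul _ hk _ hh) _ (hinv _ hk)))
        exact fix_two h1 h2 (comm_fix h1 h2 (h3 h hh)) hw hne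
      · rintro rfl
        exact ⟨by simp, fun k _ => by simp⟩
end

section
/- Let Φ : ℝ → M₂(ℂ) be a continuous map satisfying Φ(t + 2π) = Φ(t), Φ(t)* = -Φ(t), and tr Φ(t) = 0 for all t ∈ ℝ, and let u : ℝ → M₂(ℂ) be differentiable with u'(t) = -Φ(t)·u(t) for all t and u(0) = 1. Then there exists a 2×2 complex matrix ξ with ξ* = -ξ and tr ξ = 0 such that u(2π) = exp(2πξ), and the map w(φ) := u(φ)·exp(-φξ) satisfies w(φ + 2π) = w(φ), w(φ)*·w(φ) = 1, and det w(φ) = 1 for all φ ∈ ℝ. -/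
open Matrix Real

attribute [local instance] Matrix.normedAddCommGroup Matrix.normedSpace

theorem aux_exp_alg {A : Type*} [NormedRing A] [NormedAlgebra ℝ A] [NormedAlgebra ℚ A]
    (J : A) (hJ : J * J = -1) (t : ℝ) :
    NormedSpace.exp (t • J) = Real.cos t • (1 : A) + Real.sin t • J := by
  have hc : Continuous (Complex.liftAux J hJ) :=
    (Complex.liftAux J hJ).toLinearMap.continuous_of_finiteDimensional
  have h := NormedSpace.map_exp (Complex.liftAux J hJ) hc ((t : ℂ) * Complex.I)
  rw [← Complex.exp_eq_exp_ℂ, Complex.exp_mul_I] at h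
  simp only [Complex.liftAux_apply] at h
  simp [Complex.cos_ofReal_re, Complex.sin_ofReal_re, Algebra.algebraMap_eq_smul_one] at h
  exact h.symm

theorem aux_exp (J : Matrix (Fin 2) (Fin 2) ℂ) (hJ : J * J = -1) (t : ℝ) :
    NormedSpace.exp ((t : ℂ) • J) = (Real.cos t : ℂ) • (1 : Matrix (Fin 2) (Fin 2) ℂ) + (Real.sin t : ℂ) • J := by
  have e : ∀ (r : ℝ) (M : Matrix (Fin 2) (Fin 2) ℂ), (r : ℂ) • M = r • M := by
    intro r M; ext i j; simp
  rw [e, e, e]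
  let _ : NormedRing (Matrix (Fin 2) (Fin 2) ℂ) := Matrix.linftyOpNormedRing
  let _ : NormedAlgebra ℝ (Matrix (Fin 2) (Fin 2) ℂ) := Matrix.linftyOpNormedAlgebra
  let _ : NormedAlgebra ℚ (Matrix (Fin 2) (Fin 2) ℂ) := NormedAlgebra.restrictScalars ℚ ℝ _
  exact aux_exp_alg J hJ t

theorem aux_entry {u : ℝ → Matrix (Fin 2) (Fin 2) ℂ} {M : Matrix (Fin 2) (Fin 2) ℂ} {t : ℝ}
    (h : HasDerivAt u M t) (i j : Fin 2) : HasDerivAt (fun s => u s i j) (M i j) t := by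
  have h1 := hasDerivAt_pi.1 h i
  exact hasDerivAt_pi.1 h1 j

theorem aux_const (f : ℝ → ℂ) (h : ∀ t, HasDerivAt f 0 t) (t : ℝ) : f t = f 0 :=
  is_const_of_deriv_eq_zero (fun t => (h t).differentiableAt) (fun t => (h t).deriv) t 0

theorem aux_skew {X : Matrix (Fin 2) (Fin 2) ℂ} (h : Xᴴ = -X) (i j : Fin 2) :
    star (X i j) = - X j i := by
  have := congrFun (congrFun h j) i
  simpa using this

theorem aux_wronskian (Φ u v : ℝ → Matrix (Fin 2) (Fin 2) ℂ)
    (hskew : ∀ t : ℝ, (Φ t)ᴴ = -(Φ t))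
    (hu : ∀ t : ℝ, HasDerivAt u (-(Φ t) * u t) t)
    (hv : ∀ t : ℝ, HasDerivAt v (-(Φ t) * v t) t) (t : ℝ) :
    (u t)ᴴ * v t = (u 0)ᴴ * v 0 := by
  ext i j
  have := aux_const (fun s => ((u s)ᴴ * v s) i j) (fun s => by
    have hd : HasDerivAt (fun s => star (u s 0 i) * v s 0 j + star (u s 1 i) * v s 1 j) 
      _ s := ((aux_entry (hu s) 0 i).star.mul (aux_entry (hv s) 0 j)).add
        ((aux_entry (hu s) 1 i).star.mul (aux_entry (hv s) 1 j))
    convert hd using 1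
    · ext s; simp [Matrix.mul_apply, Fin.sum_univ_two]
    · have := aux_skew (hskew s)
      simp only [Matrix.mul_apply, Fin.sum_univ_two, Matrix.neg_apply, star_add, star_mul', star_neg, this]
      ring) t
  exact this

theorem aux_det (Φ u : ℝ → Matrix (Fin 2) (Fin 2) ℂ)
    (htr : ∀ t : ℝ, Matrix.trace (Φ t) = 0)
    (hu : ∀ t : ℝ, HasDerivAt u (-(Φ t) * u t) t) (t : ℝ) :
    (u t).det = (u 0).det := by
  refine aux_const (fun s => (u s).det) (fun s => ?_) t
  have hd : HasDerivAt (fun s => u s 0 0 * u s 1 1 - u s 0 1 * u s 1 0) _ s :=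
    ((aux_entry (hu s) 0 0).mul (aux_entry (hu s) 1 1)).sub
        ((aux_entry (hu s) 0 1).mul (aux_entry (hu s) 1 0))
  convert hd using 1
  · ext s; simp [Matrix.det_fin_two]
  · have := htr s
    simp only [Matrix.trace_fin_two] at this
    simp only [Matrix.mul_apply, Fin.sum_univ_two, Matrix.neg_apply]
    linear_combination (u s 0 0 * u s 1 1 - u s 0 1 * u s 1 0) * this

theorem aux_log (U : Matrix (Fin 2) (Fin 2) ℂ) (hU : Uᴴ * U = 1) (hd : U.det = 1) :
    ∃ (J : Matrix (Fin 2) (Fin 2) ℂ) (θ : ℝ), Jᴴ = -J ∧ J.trace = 0 ∧ J * J = -1 ∧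
      U = (Real.cos θ : ℂ) • (1 : Matrix (Fin 2) (Fin 2) ℂ) + (Real.sin θ : ℂ) • J := by
  have hadj : Uᴴ = U.adjugate := by
    have h1 : U * U.adjugate = 1 := by rw [Matrix.mul_adjugate, hd, one_smul]
    calc Uᴴ = Uᴴ * (U * U.adjugate) := by rw [h1, mul_one]
      _ = U.adjugate := by rw [← mul_assoc, hU, one_mul]
  rw [Matrix.adjugate_fin_two] at hadj
  have e00 : star (U 0 0) = U 1 1 := by simpa using congrFun (congrFun hadj 0) 0
  have e01 : star (U 1 0) = - U 0 1 := by simpa using congrFun (congrFun hadj 0) 1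
  have hdd := hd
  rw [Matrix.det_fin_two] at hdd
  obtain ⟨a, ha⟩ : ∃ a, U 0 0 = a := ⟨_, rfl⟩
  obtain ⟨b, hb⟩ : ∃ b, U 1 0 = b := ⟨_, rfl⟩
  have h11 : U 1 1 = star a := by rw [← e00, ha]
  have h01 : U 0 1 = - star b := by rw [← hb, e01, neg_neg]
  rw [ha, hb, h11, h01] at hdd
  have hr : a.re ^ 2 + a.im ^ 2 + b.re ^ 2 + b.im ^ 2 = 1 := by
    have := congrArg Complex.re hdd
    simp at this
    linarith
  have hUeq : U = !![a, - star b; b, star a] := by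
    ext i j; fin_cases i <;> fin_cases j <;> simp [ha, hb, h11, h01]
  have hcos : Real.cos (Real.arccos a.re) = a.re :=
    Real.cos_arccos (by nlinarith [sq_nonneg a.im, sq_nonneg b.re, sq_nonneg b.im])
      (by nlinarith [sq_nonneg a.im, sq_nonneg b.re, sq_nonneg b.im])
  have hsc := Real.sin_sq_add_cos_sq (Real.arccos a.re)
  rw [hcos] at hsc
  obtain ⟨s, hs⟩ : ∃ s, Real.sin (Real.arccos a.re) = s := ⟨_, rfl⟩
  rw [hs] at hsc
  by_cases h0 : s = 0
  · refine ⟨!![Complex.I, 0; 0, -Complex.I], Real.arccos a.re, ?_, ?_, ?_, ?_⟩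
    · ext i j; fin_cases i <;> fin_cases j <;> simp
    · simp [Matrix.trace_fin_two]
    · ext i j; fin_cases i <;> fin_cases j <;> simp [Matrix.mul_apply, Fin.sum_univ_two]
    · rw [hcos, hs, h0, hUeq]
      subst h0
      have q1 : a.im = 0 := by nlinarith [sq_nonneg a.im, sq_nonneg b.re, sq_nonneg b.im]
      have q2 : b.re = 0 := by nlinarith [sq_nonneg a.im, sq_nonneg b.re, sq_nonneg b.im]
      have q3 : b.im = 0 := by nlinarith [sq_nonneg a.im, sq_nonneg b.re, sq_nonneg b.im]
      ext i j; fin_cases i <;> fin_cases j <;> simp [Complex.ext_iff, q1, q2, q3]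
  · have hsq : s ^ 2 = a.im ^ 2 + b.re ^ 2 + b.im ^ 2 := by linarith
    have h0' : (s : ℂ) ≠ 0 := by exact_mod_cast h0
    have hsq' : (b.re ^ 2 + b.im ^ 2 + a.im ^ 2 : ℂ) = (s : ℂ) ^ 2 := by
      exact_mod_cast (by linarith : b.re ^ 2 + b.im ^ 2 + a.im ^ 2 = s ^ 2)
    have hbb : b * (starRingEnd ℂ) b = (b.re ^ 2 + b.im ^ 2 : ℂ) := by
      apply Complex.ext <;> simp [pow_two] <;> ring
    refine ⟨((s : ℂ)⁻¹) • !![a.im * Complex.I, - star b; b, -(a.im * Complex.I)], Real.arccos a.re, ?_, ?_, ?_, ?_⟩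
    · ext i j; fin_cases i <;> fin_cases j <;> simp
    · simp [Matrix.trace_fin_two]
    · have hm : !![a.im * Complex.I, - star b; b, -(a.im * Complex.I)] * !![a.im * Complex.I, - star b; b, -(a.im * Complex.I)] = (-(s : ℂ)^2) • (1 : Matrix (Fin 2) (Fin 2) ℂ) := by
        ext i j; fin_cases i <;> fin_cases j <;> simp [Matrix.mul_apply, Fin.sum_univ_two, -Complex.star_def]
        · linear_combination (a.im:ℂ)^2 * Complex.I_sq - hsq' - hbb
        · ring
        · ring
        · linear_combination (a.im:ℂ)^2 * Complex.I_sq - hsq' - hbb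
      rw [smul_mul_smul_comm, hm, smul_smul]
      have : (s:ℂ)⁻¹ * (s:ℂ)⁻¹ * -(s:ℂ)^2 = -1 := by field_simp
      rw [this, neg_smul, one_smul]
    · rw [hcos, hs, smul_smul, mul_inv_cancel₀ h0', one_smul, hUeq]
      ext i j; fin_cases i <;> fin_cases j <;> simp [Complex.ext_iff]

/-- For the solution `u` of `u' = -Φ·u`, `u(0) = 1`, with `2π`-periodic
`su(2)`-valued continuous coefficient `Φ`, there is `ξ ∈ su(2)` with `u(2π) = exp(2πξ)`,
and the corrected map `w(φ) = u(φ)·exp(-φξ)` is a `2π`-periodic `SU(2)`-valued map. -/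
theorem corrected_gauge_transformation_exists
    (Φ : ℝ → Matrix (Fin 2) (Fin 2) ℂ) (hΦ : Continuous Φ)
    (hper : ∀ t : ℝ, Φ (t + 2 * π) = Φ t)
    (hskew : ∀ t : ℝ, (Φ t)ᴴ = -(Φ t))
    (htr : ∀ t : ℝ, Matrix.trace (Φ t) = 0)
    (u : ℝ → Matrix (Fin 2) (Fin 2) ℂ)
    (hu : ∀ t : ℝ, HasDerivAt u (-(Φ t) * u t) t)
    (hu0 : u 0 = 1) :
    ∃ ξ : Matrix (Fin 2) (Fin 2) ℂ, ξᴴ = -ξ ∧ Matrix.trace ξ = 0 ∧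
      u (2 * π) = NormedSpace.exp (((2 * π : ℝ) : ℂ) • ξ) ∧
      ∀ φ : ℝ,
        (fun ψ : ℝ => u ψ * NormedSpace.exp ((-(ψ : ℂ)) • ξ)) (φ + 2 * π)
          = (fun ψ : ℝ => u ψ * NormedSpace.exp ((-(ψ : ℂ)) • ξ)) φ ∧
        (u φ * NormedSpace.exp ((-(φ : ℂ)) • ξ))ᴴ *
          (u φ * NormedSpace.exp ((-(φ : ℂ)) • ξ)) = 1 ∧
        (u φ * NormedSpace.exp ((-(φ : ℂ)) • ξ)).det = 1 := by
  have hvd : ∀ t, HasDerivAt (fun s => u (s + 2 * π)) (-(Φ t) * u (t + 2 * π)) t := by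
    intro t
    have := (hu (t + 2 * π)).comp_add_const t (2 * π)
    rwa [hper] at this
  have huu : ∀ t, (u t)ᴴ * u t = 1 := by
    intro t
    rw [aux_wronskian Φ u u hskew hu hu t, hu0]; simp
  have hdet : ∀ t, (u t).det = 1 := by
    intro t
    rw [aux_det Φ u htr hu t, hu0]; simp
  have hmon : ∀ t, u (t + 2 * π) = u t * u (2 * π) := by
    intro t
    have h := aux_wronskian Φ u (fun s => u (s + 2 * π)) hskew hu hvd t
    simp only [hu0, zero_add, conjTranspose_one, one_mul] at h
    rw [← h, ← mul_assoc, mul_eq_one_comm.1 (huu t), one_mul]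
  obtain ⟨J, θ, hJs, hJt, hJJ, hU⟩ := aux_log (u (2 * π)) (huu _) (hdet _)
  have hpi : (2 * π : ℝ) ≠ 0 := by positivity
  have hE : ∀ x : ℝ, NormedSpace.exp ((x : ℂ) • (((θ / (2 * π) : ℝ) : ℂ) • J)) =
      (Real.cos (x * (θ / (2 * π))) : ℂ) • (1 : Matrix (Fin 2) (Fin 2) ℂ)
        + (Real.sin (x * (θ / (2 * π))) : ℂ) • J := by
    intro x
    rw [smul_smul, ← Complex.ofReal_mul, aux_exp J hJJ]
  have hadd : ∀ x y : ℝ, ((Real.cos x : ℂ) • (1 : Matrix (Fin 2) (Fin 2) ℂ) + (Real.sin x : ℂ) • J) *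
      ((Real.cos y : ℂ) • (1 : Matrix (Fin 2) (Fin 2) ℂ) + (Real.sin y : ℂ) • J) =
      ((Real.cos (x + y) : ℂ) • (1 : Matrix (Fin 2) (Fin 2) ℂ) + (Real.sin (x + y) : ℂ) • J) := by
    intro x y
    rw [Real.cos_add, Real.sin_add]
    simp only [mul_add, add_mul, smul_mul_smul_comm, hJJ, mul_one, one_mul]
    push_cast
    module
  have hdJ : J.det = 1 := by
    have h := congrFun (congrFun hJJ 0) 0
    rw [Matrix.trace_fin_two] at hJt
    simp only [Matrix.mul_apply, Fin.sum_univ_two, Matrix.neg_apply, Matrix.one_apply_eq] at h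
    rw [Matrix.det_fin_two]
    linear_combination J 0 0 * hJt - h
  refine ⟨((θ / (2 * π) : ℝ) : ℂ) • J, ?_, ?_, ?_, ?_⟩
  · rw [conjTranspose_smul, hJs]; simp
  · rw [Matrix.trace_smul, hJt, smul_zero]
  · rw [hE, mul_div_cancel₀ _ hpi, hU]
  · intro φ
    have hE' := hE (-φ)
    rw [Complex.ofReal_neg] at hE'
    refine ⟨?_, ?_, ?_⟩
    · have h2 := hE (-(φ + 2 * π))
      rw [Complex.ofReal_neg] at h2
      simp only
      rw [hE', h2, hmon, hU, mul_assoc, hadd]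
      have : θ + -(φ + 2 * π) * (θ / (2 * π)) = -φ * (θ / (2 * π)) := by
        field_simp; ring
      rw [this]
    · rw [hE', conjTranspose_mul, mul_assoc, ← mul_assoc _ (u φ), huu, one_mul]
      have := hadd (-(-φ * (θ / (2 * π)))) (-φ * (θ / (2 * π)))
      rw [neg_add_cancel, Real.cos_zero, Real.sin_zero, Real.cos_neg, Real.sin_neg] at this
      rw [conjTranspose_add, conjTranspose_smul, conjTranspose_smul, hJs, conjTranspose_one]
      simpa [-Complex.ofReal_cos, -Complex.ofReal_sin] using this
    · rw [det_mul, hdet, one_mul, hE']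
      have hs : (Real.cos (-φ * (θ / (2 * π))) : ℂ) ^ 2 + (Real.sin (-φ * (θ / (2 * π))) : ℂ) ^ 2 = 1 := by
        exact_mod_cast Real.cos_sq_add_sin_sq _
      generalize (Real.cos (-φ * (θ / (2 * π))) : ℂ) = c at *
      generalize (Real.sin (-φ * (θ / (2 * π))) : ℂ) = s at *
      rw [Matrix.trace_fin_two] at hJt
      rw [Matrix.det_fin_two] at hdJ ⊢
      simp
      linear_combination hs + c * s * hJt + s ^ 2 * hdJ
end
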